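/- Let Γ and Ω be two non-parallel affine planes in ℝ³, let p be a point lying on neither plane, and let f be the central projection from Γ to Ω through p. Let a, b, c, d be points of Γ such that the closed segments from a to b and from c to d contain no vanishing point of Γ. Then the closed segments from a to b and from c to d are disjoint if and only if the closed segments from f(a) to f(b) and from f(c) to f(d) are disjoint. -/

import Mathlib

noncomputable section

/-- Points of `ℝ³`. -/
abbrev E3 : Type := Fin 3 → ℝ

/-- An affine plane in `ℝ³`: a nonempty affine subspace whose direction has dimension 2. -/
def IsPlane (s : AffineSubspace ℝ E3) : Prop :=
  (s : Set E3).Nonempty ∧ Module.finrank ℝ s.direction = 2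

/-- `v` is a vanishing point of the plane `Γ` with respect to the central projection from
`Γ` to `Ω` through `p`: it lies in `Γ` and the line through `p` and `v` is parallel to `Ω`. -/
def VanishingPt (Γ Ω : AffineSubspace ℝ E3) (p v : E3) : Prop :=
  v ∈ Γ ∧ v -ᵥ p ∈ Ω.direction

/-- `f` is the central projection from `Γ` to `Ω` through `p`: every non-vanishing point
`a` of `Γ` is sent to the (unique) intersection point of the line through `p` and `a`
with `Ω`. -/
def IsCentralProj (Γ Ω : AffineSubspace ℝ E3) (p : E3) (f : E3 → E3) : Prop :=
  ∀ a ∈ Γ, a -ᵥ p ∉ Ω.direction → f a ∈ Ω ∧ f a ∈ affineSpan ℝ {p, a}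

theorem plane_functional (s : AffineSubspace ℝ E3) (p : E3) (hs : IsPlane s) (hp : p ∉ s) :
    ∃ g : E3 →ₗ[ℝ] ℝ, (∀ x, x ∈ s ↔ g (x - p) = 1) ∧ (∀ v, v ∈ s.direction ↔ g v = 0) := by
  obtain ⟨⟨q, hq⟩, hdim⟩ := hs
  have hq' : q ∈ s := hq
  have hv : q - p ∉ s.direction := by
    intro h
    apply hp
    have h2 : p -ᵥ q ∈ s.direction := by
      have := s.direction.neg_mem h
      simpa using this
    exact (AffineSubspace.vsub_right_mem_direction_iff_mem hq' p).1 h2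
  obtain ⟨f, hf, hle⟩ := Submodule.exists_le_ker_of_notMem hv
  have hker : s.direction = LinearMap.ker f := by
    apply Submodule.eq_of_le_of_finrank_eq hle
    have h1 := LinearMap.finrank_range_add_finrank_ker f
    have h2 : LinearMap.range f = ⊤ := by
      apply LinearMap.range_eq_top.2
      apply LinearMap.surjective
      rintro rfl
      simp at hf
    have h3 : Module.finrank ℝ E3 = 3 := Module.finrank_fin_fun ℝ
    rw [h2, finrank_top, Module.finrank_self, h3] at h1
    rw [hdim]
    exact (Nat.add_left_cancel (h1 : 1 + _ = 1 + 2)).symm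
  have key : ∀ v, v ∈ s.direction ↔ f v = 0 := by
    intro v
    rw [hker, LinearMap.mem_ker]
  refine ⟨(f (q - p))⁻¹ • f, ?_, ?_⟩
  · intro x
    rw [← AffineSubspace.vsub_right_mem_direction_iff_mem hq' x, key]
    have : f (x -ᵥ q) = f (x - p) - f (q - p) := by
      rw [← map_sub]; congr 1; simp
    rw [this]
    simp only [LinearMap.smul_apply, smul_eq_mul]
    rw [inv_mul_eq_one₀ hf, sub_eq_zero, eq_comm]
  · intro v
    rw [key]
    rw [LinearMap.smul_apply, smul_eq_mul, mul_eq_zero]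
    simp only [inv_eq_zero, hf, false_or]

theorem image_segment_proj (h : E3 →ₗ[ℝ] ℝ) (p a b : E3)
    (hn : ∀ x ∈ segment ℝ a b, h (x - p) ≠ 0) :
    (fun x => p + (h (x - p))⁻¹ • (x - p)) '' segment ℝ a b =
      segment ℝ (p + (h (a - p))⁻¹ • (a - p)) (p + (h (b - p))⁻¹ • (b - p)) := by
  have hα := hn a (left_mem_segment ℝ a b)
  have hβ := hn b (right_mem_segment ℝ a b)
  have hlin : ∀ u v : ℝ, u + v = 1 →
      h (u • a + v • b - p) = u * h (a - p) + v * h (b - p) := by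
    intro u v huv
    have : u • a + v • b - p = u • (a - p) + v • (b - p) := by
      obtain rfl : u = 1 - v := by linarith
      module
    rw [this]; simp
  obtain ⟨γ, hγ⟩ : ∃ γ, h (b - p) = γ * h (a - p) := ⟨h (b - p) / h (a - p), by field_simp⟩
  have hγ0 : 0 < γ := by
    by_contra hneg
    push Not at hneg
    have h1 : 0 < 1 - γ := by linarith
    have hs : (-γ) / (1 - γ) + 1 / (1 - γ) = 1 := by field_simp; ring
    apply hn (((-γ) / (1 - γ)) • a + (1 / (1 - γ)) • b)
    · exact ⟨_, _, div_nonneg (by linarith) h1.le, by positivity, hs, rfl⟩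
    · rw [hlin _ _ hs, hγ]; field_simp; ring
  rw [hγ] at hlin ⊢
  generalize h (a - p) = α at *
  ext y
  constructor
  · rintro ⟨x, ⟨u, v, hu, hv, huv, rfl⟩, rfl⟩
    have hD : 0 < u + v * γ := by
      rcases hu.eq_or_lt with h0 | h0
      · subst h0
        have : v = 1 := by linarith
        subst this; linarith
      · positivity
    refine ⟨u / (u + v * γ), v * γ / (u + v * γ), by positivity, by positivity,
      by field_simp, ?_⟩
    simp only
    rw [hlin u v huv]
    have hD2 : u * α + v * (γ * α) ≠ 0 := by
      have : u * α + v * (γ * α) = (u + v * γ) * α := by ring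
      rw [this]; positivity
    ext i
    simp only [Pi.add_apply, Pi.smul_apply, Pi.sub_apply, smul_eq_mul]
    have e : u * α + v * (γ * α) = (u + v * γ) * α := by ring
    rw [e]
    obtain rfl : u = 1 - v := by linarith
    field_simp
    ring
  · rintro ⟨s, t, hs, ht, hst, rfl⟩
    have hD : 0 < s * γ + t := by
      rcases ht.eq_or_lt with h0 | h0
      · subst h0
        have : s = 1 := by linarith
        subst this; linarith
      · positivity
    have hsum : s * γ / (s * γ + t) + t / (s * γ + t) = 1 := by field_simp
    refine ⟨(s * γ / (s * γ + t)) • a + (t / (s * γ + t)) • b,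
      ⟨_, _, by positivity, by positivity, hsum, rfl⟩, ?_⟩
    simp only
    rw [hlin _ _ hsum]
    have e : s * γ / (s * γ + t) * α + t / (s * γ + t) * (γ * α) = γ * α / (s * γ + t) := by
      obtain rfl : s = 1 - t := by linarith
      field_simp
      ring
    rw [e]
    ext i
    simp only [Pi.add_apply, Pi.smul_apply, Pi.sub_apply, smul_eq_mul]
    have hD0 := hD.ne'
    generalize hK : s * γ + t = K at *
    obtain rfl : s = 1 - t := by linarith
    field_simp
    rw [← hK]
    ring

/-- If the closed segments from `a` to `b` and from `c` to `d` (with `a,b,c,d ∈ Γ`)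
contain no vanishing point of `Γ`, then they are disjoint if and only if their images,
the closed segments from `f a` to `f b` and from `f c` to `f d`, are disjoint. -/
theorem centralProj_disjoint_segments
    (Γ Ω : AffineSubspace ℝ E3) (p : E3) (f : E3 → E3)
    (hΓ : IsPlane Γ) (hΩ : IsPlane Ω)
    (hnp : Γ.direction ≠ Ω.direction)
    (hpΓ : p ∉ Γ) (hpΩ : p ∉ Ω)
    (hf : IsCentralProj Γ Ω p f)
    (a b c d : E3) (ha : a ∈ Γ) (hb : b ∈ Γ) (hc : c ∈ Γ) (hd : d ∈ Γ)
    (hnv₁ : ∀ x ∈ segment ℝ a b, ¬ VanishingPt Γ Ω p x)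
    (hnv₂ : ∀ x ∈ segment ℝ c d, ¬ VanishingPt Γ Ω p x) :
    segment ℝ a b ∩ segment ℝ c d = ∅ ↔
      segment ℝ (f a) (f b) ∩ segment ℝ (f c) (f d) = ∅ := by
  obtain ⟨g, hg, -⟩ := plane_functional Γ p hΓ hpΓ
  obtain ⟨h, hh, hh0⟩ := plane_functional Ω p hΩ hpΩ
  have hsub : ∀ x ∈ Γ, ∀ y ∈ Γ, segment ℝ x y ⊆ Γ := fun x hx y hy =>
    Γ.convex.segment_subset hx hy
  have hn₁ : ∀ x ∈ segment ℝ a b, h (x - p) ≠ 0 := fun x hx h0 =>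
    hnv₁ x hx ⟨hsub a ha b hb hx, (hh0 _).2 h0⟩
  have hn₂ : ∀ x ∈ segment ℝ c d, h (x - p) ≠ 0 := fun x hx h0 =>
    hnv₂ x hx ⟨hsub c hc d hd hx, (hh0 _).2 h0⟩
  have hfx : ∀ x ∈ Γ, h (x - p) ≠ 0 → f x = p + (h (x - p))⁻¹ • (x - p) := by
    intro x hx hx0
    obtain ⟨h1, h2⟩ := hf x hx (fun h' => hx0 ((hh0 _).1 h'))
    obtain ⟨r, hr⟩ := mem_affineSpan_pair_iff_exists_lineMap_eq.1 h2
    have hr' : f x = p + r • (x - p) := by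
      rw [← hr, AffineMap.lineMap_apply]; simp [add_comm]
    rw [hh, hr', add_sub_cancel_left, map_smul, smul_eq_mul] at h1
    rw [hr', eq_inv_of_mul_eq_one_left h1]
  have la := left_mem_segment ℝ a b
  have lb := right_mem_segment ℝ a b
  have lc := left_mem_segment ℝ c d
  have ld := right_mem_segment ℝ c d
  rw [hfx a ha (hn₁ a la), hfx b hb (hn₁ b lb), hfx c hc (hn₂ c lc), hfx d hd (hn₂ d ld),
    ← image_segment_proj h p a b hn₁, ← image_segment_proj h p c d hn₂]
  have hinj : Set.InjOn (fun x => p + (h (x - p))⁻¹ • (x - p))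
      (segment ℝ a b ∪ segment ℝ c d) := by
    have hU : ∀ x ∈ segment ℝ a b ∪ segment ℝ c d, g (x - p) = 1 ∧ h (x - p) ≠ 0 := by
      rintro x (hx | hx)
      · exact ⟨(hg x).1 (hsub a ha b hb hx), hn₁ x hx⟩
      · exact ⟨(hg x).1 (hsub c hc d hd hx), hn₂ x hx⟩
    intro x hx y hy hxy
    obtain ⟨gx, hx0⟩ := hU x hx
    obtain ⟨gy, hy0⟩ := hU y hy
    have e : (h (x - p))⁻¹ • (x - p) = (h (y - p))⁻¹ • (y - p) := add_left_cancel hxy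
    have e2 := congrArg g e
    rw [map_smul, map_smul, gx, gy, smul_eq_mul, smul_eq_mul, mul_one, mul_one] at e2
    rw [e2] at e
    have e3 := smul_right_injective E3 (inv_ne_zero hy0) e
    exact sub_left_injective e3
  rw [← hinj.image_inter Set.subset_union_left Set.subset_union_right, Set.image_eq_empty]
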